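/- Let R : P₂ → ℝ be Lebesgue measurable and C ∈ ℝ. If L₁, L₂ : (0,1) → ℝ are Lebesgue measurable functions each solving the perturbed Spence-Abel system almost everywhere with data (R, C), then L₁ = L₂ almost everywhere on (0,1). -/

import Mathlib

open MeasureTheory Set

/-- The parameter space `P₂ = {(x,y) : 0 < x < y < 1}`. -/
def P2 : Set (ℝ × ℝ) := {p | 0 < p.1 ∧ p.1 < p.2 ∧ p.2 < 1}

/-- `L` solves the perturbed Spence–Abel system almost everywhere with data `(R, C)`. -/
def SolvesAE (R : ℝ × ℝ → ℝ) (C : ℝ) (L : ℝ → ℝ) : Prop :=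
  (∀ᵐ p ∂(volume.restrict P2),
    L p.1 - L p.2 - L (p.1 / p.2) - L ((p.2 - 1) / (p.1 - 1))
      + L (p.1 * (p.2 - 1) / (p.2 * (p.1 - 1))) = R p) ∧
  (∀ᵐ x ∂(volume.restrict (Set.Ioo (0:ℝ) 1)), L (1 - x) = C - L x)



/-- Part 4: smooth solutions -/
theorem info_zero (F F1 F2 F3 : ℝ → ℝ)
    (h1 : ∀ x ∈ Ioo (0:ℝ) 1, HasDerivAt F (F1 x) x)
    (h2 : ∀ x ∈ Ioo (0:ℝ) 1, HasDerivAt F1 (F2 x) x)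
    (h3 : ∀ x ∈ Ioo (0:ℝ) 1, HasDerivAt F2 (F3 x) x)
    (hr : ∀ x ∈ Ioo (0:ℝ) 1, F (1 - x) = - F x)
    (he : ∀ x y : ℝ, 0 < x → x < y → y < 1 →
      F x - F y - F (x / y) - F ((1 - y) / (1 - x)) + F (x * (1 - y) / (y * (1 - x))) = 0) :
    ∀ x ∈ Ioo (0:ℝ) 1, F x = 0 := by
  -- the p, q form
  have hpq : ∀ p ∈ Ioo (0:ℝ) 1, ∀ q ∈ Ioo (0:ℝ) 1,
      F p + F q - F (p * q) - F (p * (1 - q) / (1 - p * q)) - F (q * (1 - p) / (1 - p * q)) = 0 := by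
    rintro p ⟨hp0, hp1⟩ q ⟨hq0, hq1⟩
    have hpq1 : 0 < 1 - p * q := by nlinarith
    have hx0 : 0 < p * (1 - q) / (1 - p * q) := div_pos (mul_pos hp0 (by linarith)) hpq1
    have hxy : p * (1 - q) / (1 - p * q) < (1 - q) / (1 - p * q) := by
      gcongr
      nlinarith
    have hy1 : (1 - q) / (1 - p * q) < 1 := by
      rw [div_lt_one hpq1]; nlinarith
    have e := he _ _ hx0 hxy hy1
    have hpq' : 1 - p * q ≠ 0 := hpq1.ne'
    have hq' : (1 - q) ≠ 0 := by linarith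
    have hp' : (1 - p) ≠ 0 := by linarith
    have e1 : (p * (1 - q) / (1 - p * q)) / ((1 - q) / (1 - p * q)) = p := by
      field_simp
    have ey : 1 - (1 - q) / (1 - p * q) = q * (1 - p) / (1 - p * q) := by
      rw [eq_div_iff hpq', sub_mul, div_mul_cancel₀ _ hpq']; ring
    have ex : 1 - p * (1 - q) / (1 - p * q) = (1 - p) / (1 - p * q) := by
      field_simp; ring
    have e2 : (1 - (1 - q) / (1 - p * q)) / (1 - p * (1 - q) / (1 - p * q)) = q := by
      rw [ex, ey, div_div_div_cancel_right₀ hpq']; field_simp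
    have e3 : p * (1 - q) / (1 - p * q) * (1 - (1 - q) / (1 - p * q)) /
      ((1 - q) / (1 - p * q) * (1 - p * (1 - q) / (1 - p * q))) = p * q := by
      rw [ex, ey]; field_simp
    rw [e1, e2, e3] at e
    have hry := hr ((1 - q) / (1 - p * q)) ⟨hx0.trans hxy, hy1⟩
    rw [ey] at hry
    linarith
  have mA : ∀ p ∈ Ioo (0:ℝ) 1, ∀ q ∈ Ioo (0:ℝ) 1, p * (1 - q) / (1 - p * q) ∈ Ioo (0:ℝ) 1 := by
    rintro p ⟨hp0, hp1⟩ q ⟨hq0, hq1⟩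
    have hpq1 : 0 < 1 - p * q := by nlinarith
    refine ⟨div_pos (mul_pos hp0 (by linarith)) hpq1, ?_⟩
    rw [div_lt_one hpq1]; nlinarith
  have mM : ∀ p ∈ Ioo (0:ℝ) 1, ∀ q ∈ Ioo (0:ℝ) 1, p * q ∈ Ioo (0:ℝ) 1 := by
    rintro p ⟨hp0, hp1⟩ q ⟨hq0, hq1⟩
    exact ⟨mul_pos hp0 hq0, by nlinarith⟩
  have mB : ∀ p ∈ Ioo (0:ℝ) 1, ∀ q ∈ Ioo (0:ℝ) 1, q * (1 - p) / (1 - p * q) ∈ Ioo (0:ℝ) 1 := by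
    intro p hp q hq
    have := mA q hq p hp
    rwa [mul_comm q p] at this
  -- first derivative
  have E0 : ∀ p ∈ Ioo (0:ℝ) 1, ∀ q ∈ Ioo (0:ℝ) 1,
      F1 p - q * F1 (p * q) - F1 (p * (1 - q) / (1 - p * q)) * ((1 - q) / (1 - p * q) ^ 2)
        + F1 (q * (1 - p) / (1 - p * q)) * (q * (1 - q) / (1 - p * q) ^ 2) = 0 := by
    intro p hp q hq
    have hpq1 : 1 - p * q ≠ 0 := by have := (mM p hp q hq).2; linarith
    have d0 : HasDerivAt (fun p : ℝ => p * q) q p := by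
      simpa using (hasDerivAt_id p).mul_const q
    have dA : HasDerivAt (fun p : ℝ => p * (1 - q) / (1 - p * q)) ((1 - q) / (1 - p * q) ^ 2) p := by
      refine HasDerivAt.congr_deriv (((hasDerivAt_id p).mul_const (1 - q)).div (d0.const_sub 1) hpq1) ?_
      simp only [id]; congr 1; ring
    have dB : HasDerivAt (fun p : ℝ => q * (1 - p) / (1 - p * q)) (-(q * (1 - q) / (1 - p * q) ^ 2)) p := by
      refine HasDerivAt.congr_deriv ((((hasDerivAt_id p).const_sub 1).const_mul q).div (d0.const_sub 1) hpq1) ?_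
      simp only [id]; rw [← neg_div]; congr 1; ring
    have D := ((((h1 p hp).add_const (F q)).sub ((h1 _ (mM p hp q hq)).comp p d0)).sub
      ((h1 _ (mA p hp q hq)).comp p dA)).sub ((h1 _ (mB p hp q hq)).comp p dB)
    have D0 : HasDerivAt (fun _ : ℝ => (0:ℝ)) 0 p := hasDerivAt_const _ _
    have := D0.congr_of_eventuallyEq (f₁ := fun p => F p + F q - F (p * q) - F (p * (1 - q) / (1 - p * q)) - F (q * (1 - p) / (1 - p * q))) (by
      filter_upwards [isOpen_Ioo.mem_nhds hp] with p' hp'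
      exact hpq p' hp' q hq)
    have := D.unique this
    linarith
  set φ : ℝ → ℝ := fun x => x * (1 - x) * F1 x with hφ
  set φ1 : ℝ → ℝ := fun x => (1 - 2 * x) * F1 x + x * (1 - x) * F2 x with hφ1
  set φ2 : ℝ → ℝ := fun x => - 2 * F1 x + 2 * (1 - 2 * x) * F2 x + x * (1 - x) * F3 x with hφ2
  have dφ : ∀ x ∈ Ioo (0:ℝ) 1, HasDerivAt φ (φ1 x) x := by
    intro x hx
    refine HasDerivAt.congr_deriv ((((hasDerivAt_id x).mul ((hasDerivAt_id x).const_sub 1))).mul (h2 x hx)) ?_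
    simp only [hφ1, id, Pi.mul_apply]; ring
  have dφ1 : ∀ x ∈ Ioo (0:ℝ) 1, HasDerivAt φ1 (φ2 x) x := by
    intro x hx
    refine HasDerivAt.congr_deriv (((((hasDerivAt_id x).const_mul 2).const_sub 1).mul (h2 x hx)).add
      ((((hasDerivAt_id x).mul ((hasDerivAt_id x).const_sub 1))).mul (h3 x hx))) ?_
    simp [hφ2]; ring
  have F1s : ∀ x ∈ Ioo (0:ℝ) 1, F1 (1 - x) = F1 x := by
    intro x hx
    have hx' : 1 - x ∈ Ioo (0:ℝ) 1 := ⟨by linarith [hx.2], by linarith [hx.1]⟩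
    have a := (h1 _ hx').comp x ((hasDerivAt_id x).const_sub 1)
    have b := (h1 x hx).neg.congr_of_eventuallyEq (f₁ := F ∘ (fun x => 1 - x)) (by
      filter_upwards [isOpen_Ioo.mem_nhds hx] with p' hp'
      simpa using hr p' hp')
    have := a.unique b
    linarith
  have φs : ∀ x ∈ Ioo (0:ℝ) 1, φ (1 - x) = φ x := by
    intro x hx
    simp only [hφ, F1s x hx]; ring
  have E1 : ∀ p ∈ Ioo (0:ℝ) 1, ∀ q ∈ Ioo (0:ℝ) 1,
      φ p - φ (p * q) * (1 - p) / (1 - p * q) = φ (p * (1 - q) / (1 - p * q))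
        - p * φ (q * (1 - p) / (1 - p * q)) := by
    intro p hp q hq
    have e := E0 p hp q hq
    have hpq1 : 1 - p * q ≠ 0 := by have := (mM p hp q hq).2; linarith
    have e' : F1 p = q * F1 (p * q) + F1 (p * (1 - q) / (1 - p * q)) * ((1 - q) / (1 - p * q) ^ 2)
        - F1 (q * (1 - p) / (1 - p * q)) * (q * (1 - q) / (1 - p * q) ^ 2) := by linarith
    simp only [hφ]
    rw [e']
    generalize F1 (p * (1 - q) / (1 - p * q)) = a
    generalize F1 (q * (1 - p) / (1 - p * q)) = b
    generalize F1 (p * q) = c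
    field_simp
    ring
  have E : ∀ p ∈ Ioo (0:ℝ) 1, ∀ q ∈ Ioo (0:ℝ) 1,
      φ p + p * φ q - φ (p * q) = (1 - p * q) * φ (p * (1 - q) / (1 - p * q)) := by
    intro p hp q hq
    have a := E1 p hp q hq
    have b := E1 q hq p hp
    rw [mul_comm q p] at b
    have hpq1 : 1 - p * q ≠ 0 := by have := (mM p hp q hq).2; linarith
    have c : φ p + p * φ q - (φ (p * q) * (1 - p) / (1 - p * q) + p * (φ (p * q) * (1 - q) / (1 - p * q)))
      = (1 - p * q) * φ (p * (1 - q) / (1 - p * q)) := by linear_combination a + p * b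
    rw [← c]
    congr 1
    field_simp; ring
  -- fundamental equation of information
  have I0 : ∀ x y : ℝ, 0 < x → 0 < y → x + y < 1 →
      φ x + (1 - x) * φ (y / (1 - x)) = φ y + (1 - y) * φ (x / (1 - y)) := by
    intro x y hx hy hxy
    have h1x : 0 < 1 - x := by linarith
    have h1y : 0 < 1 - y := by linarith
    have hq : y / (1 - x) ∈ Ioo (0:ℝ) 1 := ⟨by positivity, by rw [div_lt_one h1x]; linarith⟩
    have e := E (1 - x) ⟨h1x, by linarith⟩ _ hq
    have e1 : (1 - x) * (y / (1 - x)) = y := by field_simp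
    have e2 : (1 - x) * (1 - y / (1 - x)) / (1 - y) = 1 - x / (1 - y) := by field_simp; ring
    rw [e1, e2, φs x ⟨hx, by linarith⟩, φs (x / (1 - y)) ⟨by positivity, by rw [div_lt_one h1y]; linarith⟩] at e
    linarith
  have I1 : ∀ x y : ℝ, 0 < x → 0 < y → x + y < 1 →
      φ1 (y / (1 - x)) = φ1 y - φ (x / (1 - y)) + φ1 (x / (1 - y)) * (x / (1 - y)) := by
    intro x y hx hy hxy
    have h1x : 0 < 1 - x := by linarith
    have h1y : 0 < 1 - y := by linarith
    have hs : y / (1 - x) ∈ Ioo (0:ℝ) 1 := ⟨by positivity, by rw [div_lt_one h1x]; linarith⟩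
    have ht : x / (1 - y) ∈ Ioo (0:ℝ) 1 := ⟨by positivity, by rw [div_lt_one h1y]; linarith⟩
    have ds : HasDerivAt (fun y : ℝ => y / (1 - x)) (1 / (1 - x)) y := (hasDerivAt_id y).div_const _
    have dt : HasDerivAt (fun y : ℝ => x / (1 - y)) (x / (1 - y) ^ 2) y := by
      refine HasDerivAt.congr_deriv ((hasDerivAt_const y x).div ((hasDerivAt_id y).const_sub 1) h1y.ne') ?_
      simp
    have D1 := (((dφ _ hs).comp y ds).const_mul (1 - x)).const_add (φ x)
    have D2 := (dφ y ⟨hy, by linarith⟩).add (((hasDerivAt_id y).const_sub 1).mul ((dφ _ ht).comp y dt))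
    have D2' := D2.congr_of_eventuallyEq (f₁ := fun y => φ x + (1 - x) * (φ ∘ fun y => y / (1 - x)) y) (by
      filter_upwards [isOpen_Ioo.mem_nhds (show y ∈ Ioo 0 (1 - x) from ⟨hy, by linarith⟩)] with z hz
      have := I0 x z hx hz.1 (by linarith [hz.2])
      simpa using this)
    have := D1.unique D2'
    simp only [Function.comp, id] at this
    field_simp at this ⊢
    linarith
  have I2 : ∀ x y : ℝ, 0 < x → 0 < y → x + y < 1 →
      φ2 (y / (1 - x)) * (y / (1 - x) ^ 2) = φ2 (x / (1 - y)) * (x / (1 - y) ^ 2) := by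
    intro x y hx hy hxy
    have h1x : 0 < 1 - x := by linarith
    have h1y : 0 < 1 - y := by linarith
    have hs : y / (1 - x) ∈ Ioo (0:ℝ) 1 := ⟨by positivity, by rw [div_lt_one h1x]; linarith⟩
    have ht : x / (1 - y) ∈ Ioo (0:ℝ) 1 := ⟨by positivity, by rw [div_lt_one h1y]; linarith⟩
    have dt : HasDerivAt (fun x : ℝ => x / (1 - y)) (1 / (1 - y)) x := (hasDerivAt_id x).div_const _
    have ds : HasDerivAt (fun x : ℝ => y / (1 - x)) (y / (1 - x) ^ 2) x := by
      refine HasDerivAt.congr_deriv ((hasDerivAt_const x y).div ((hasDerivAt_id x).const_sub 1) h1x.ne') ?_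
      simp
    have D1 := (dφ1 _ hs).comp x ds
    have D2 := (((dφ _ ht).comp x dt).const_sub (φ1 y)).add (((dφ1 _ ht).comp x dt).mul dt)
    have D2' := D2.congr_of_eventuallyEq (f₁ := φ1 ∘ fun x => y / (1 - x)) (by
      filter_upwards [isOpen_Ioo.mem_nhds (show x ∈ Ioo 0 (1 - y) from ⟨hx, by linarith⟩)] with z hz
      have := I1 z y hz.1 hy (by linarith [hz.2])
      simpa using this)
    have := D1.unique D2'
    rw [this]
    simp only [Function.comp]
    field_simp
    ring
  obtain ⟨k, hk⟩ : ∃ k, ∀ s ∈ Ioo (0:ℝ) 1, φ2 s = k * (1 / s + 1 / (1 - s)) := by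
    refine ⟨φ2 (1/2) * (1/4), ?_⟩
    rintro s ⟨hs0, hs1⟩
    have hd : 0 < 2 - s := by linarith
    have e := I2 ((1 - s) / (2 - s)) (s / (2 - s)) (div_pos (by linarith) hd) (by positivity)
      (by rw [← add_div, div_lt_one hd]; linarith)
    have a1 : 1 - (1 - s) / (2 - s) = 1 / (2 - s) := by field_simp; ring
    have a2 : 1 - s / (2 - s) = 2 * (1 - s) / (2 - s) := by field_simp; ring
    have hs' : 0 < 1 - s := by linarith
    rw [a1, a2] at e
    have b1 : s / (2 - s) / (1 / (2 - s)) = s := by field_simp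
    have b2 : (1 - s) / (2 - s) / (2 * (1 - s) / (2 - s)) = 1 / 2 := by field_simp
    rw [b1, b2] at e
    field_simp at e ⊢
    linarith
  have const : ∀ f : ℝ → ℝ, (∀ x ∈ Ioo (0:ℝ) 1, HasDerivAt f 0 x) → ∃ c, ∀ x ∈ Ioo (0:ℝ) 1, f x = c := by
    intro f hf
    refine ⟨f (1/2), fun x hx => ?_⟩
    exact isOpen_Ioo.is_const_of_deriv_eq_zero isPreconnected_Ioo
      (fun z hz => (hf z hz).differentiableAt.differentiableWithinAt)
      (fun z hz => (hf z hz).deriv) hx (by norm_num)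
  have dl : ∀ x ∈ Ioo (0:ℝ) 1, HasDerivAt (fun x => Real.log (1 - x)) (-(1 / (1 - x))) x := by
    intro x hx
    refine HasDerivAt.congr_deriv (((hasDerivAt_id x).const_sub 1).log (by have := hx.2; simp; linarith)) ?_
    simp [neg_div]
  obtain ⟨c, hc⟩ := const (fun x => φ1 x - k * (Real.log x - Real.log (1 - x))) (by
    intro x hx
    refine HasDerivAt.congr_deriv ((dφ1 x hx).sub (((Real.hasDerivAt_log hx.1.ne').sub (dl x hx)).const_mul k)) ?_
    rw [hk x hx]; simp)
  obtain ⟨d, hd⟩ := const (fun x => φ x - k * (x * Real.log x + (1 - x) * Real.log (1 - x)) - c * x) (by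
    intro x hx
    have := hc x hx
    have h1x : 1 - x ≠ 0 := by have := hx.2; linarith
    have hx0 := hx.1.ne'
    refine HasDerivAt.congr_deriv (((dφ x hx).sub ((((hasDerivAt_id x).mul (Real.hasDerivAt_log hx.1.ne')).add
      (((hasDerivAt_id x).const_sub 1).mul (dl x hx))).const_mul k)).sub ((hasDerivAt_id x).const_mul c)) ?_
    simp only [id]
    field_simp
    linarith)
  have hφk : ∀ x ∈ Ioo (0:ℝ) 1, φ x = k * (x * Real.log x + (1 - x) * Real.log (1 - x)) + c * x + d := by
    intro x hx
    linarith [hd x hx]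
  have hc0 : c = 0 := by
    have a := φs (1/4) (by norm_num)
    rw [hφk _ (by norm_num), hφk _ (by norm_num)] at a
    norm_num at a
    linarith
  subst hc0
  have hd0 : d = 0 := by
    have a := E (1/2) (by norm_num) (1/2) (by norm_num)
    norm_num at a
    rw [hφk _ (by norm_num), hφk _ (by norm_num), hφk _ (by norm_num)] at a
    have l1 : Real.log (1/2) = - Real.log 2 := by simp
    have l2 : Real.log (1/4) = - (2 * Real.log 2) := by
      rw [show (1/4:ℝ) = (2^2)⁻¹ by norm_num, Real.log_inv, Real.log_pow]; simp
    have l3 : Real.log (3/4) = Real.log 3 - (2 * Real.log 2) := by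
      rw [Real.log_div (by norm_num) (by norm_num), show (4:ℝ) = (2^2) by norm_num, Real.log_pow]; simp
    have l4 : Real.log (1/3) = - Real.log 3 := by simp
    have l5 : Real.log (2/3) = Real.log 2 - Real.log 3 := by
      rw [Real.log_div (by norm_num) (by norm_num)]
    rw [show (1:ℝ) - 1/2 = 1/2 by norm_num, show (1:ℝ) - 1/4 = 3/4 by norm_num,
      show (1:ℝ) - 1/3 = 2/3 by norm_num, l1, l2, l3, l4, l5] at a
    linarith
  subst hd0
  have Fh : F (1/2) = 0 := by
    have := hr (1/2) (by norm_num)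
    norm_num at this
    linarith
  have hk0 : k = 0 := by
    set r : ℝ := (Real.sqrt 5 - 1) / 2 with hrdef
    have s5 : Real.sqrt 5 ^ 2 = 5 := Real.sq_sqrt (by norm_num)
    have s5l : 2 < Real.sqrt 5 := by
      rw [Real.lt_sqrt (by norm_num)]; norm_num
    have s5u : Real.sqrt 5 < 3 := by
      rw [Real.sqrt_lt' (by norm_num)]; norm_num
    have hr2 : r * r = 1 - r := by rw [hrdef]; nlinarith
    have hrl : 1/2 < r := by rw [hrdef]; linarith
    have hru : r < 1 := by rw [hrdef]; linarith
    have Fr : F r = 0 := by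
      have a := he (1 - r) r (by linarith) (by linarith) hru
      have r0 : r ≠ 0 := by linarith
      have e1 : (1 - r) / r = r := by rw [← hr2]; field_simp
      have e3 : (1 - r) * (1 - r) / (r * r) = 1 - r := by rw [← hr2]; field_simp
      have e4 := hr r ⟨by linarith, hru⟩
      rw [sub_sub_cancel, e1, e3, e4] at a
      linarith
    obtain ⟨ξ, hξ, hξ0⟩ := exists_hasDerivAt_eq_zero (f := F) (f' := F1) hrl
      (fun x hx => (h1 x ⟨by linarith [hx.1], by linarith [hx.2]⟩).continuousAt.continuousWithinAt)
      (by rw [Fh, Fr]) (fun x hx => h1 x ⟨by linarith [hx.1], by linarith [hx.2]⟩)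
    have hξm : ξ ∈ Ioo (0:ℝ) 1 := ⟨by linarith [hξ.1], by linarith [hξ.2]⟩
    have a := hφk ξ hξm
    simp only [hφ, hξ0] at a
    have n1 := Real.log_neg hξm.1 hξm.2
    have n2 := Real.log_neg (show 0 < 1 - ξ by linarith [hξm.2]) (by linarith [hξm.1])
    have n3 : ξ * Real.log ξ + (1 - ξ) * Real.log (1 - ξ) < 0 := by
      nlinarith [hξm.1, hξm.2, mul_neg_of_pos_of_neg hξm.1 n1,
        mul_neg_of_pos_of_neg (show 0 < 1 - ξ by linarith [hξm.2]) n2]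
    have : k * (ξ * Real.log ξ + (1 - ξ) * Real.log (1 - ξ)) = 0 := by linarith
    rcases mul_eq_zero.1 this with h | h
    · exact h
    · exact absurd h n3.ne
  subst hk0
  obtain ⟨m, hm⟩ := const F (by
    intro x hx
    have a := hφk x hx
    simp only [hφ] at a
    have h1x : 0 < 1 - x := by linarith [hx.2]
    have : F1 x = 0 := by
      have hp : x * (1 - x) ≠ 0 := (mul_pos hx.1 h1x).ne'
      have a' : x * (1 - x) * F1 x = 0 := by linarith
      exact (mul_eq_zero.1 a').resolve_left hp
    rw [← this]; exact h1 x hx)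
  intro x hx
  rw [hm x hx, ← hm (1/2) (by norm_num), Fh]

theorem ae_comp {F G : ℝ → ℝ} {K S : Set ℝ} (hFG : ∀ᵐ x, x ∈ K → F x = G x) (m n : ℝ → ℝ)
    (hm : ∀ y ∈ S, m y ∈ K) (hn : ∀ y ∈ S, n (m y) = y) (hd : DifferentiableOn ℝ n K) :
    ∀ᵐ y, y ∈ S → F (m y) = G (m y) := by
  rw [ae_iff] at hFG ⊢
  have hZ : {a | ¬ (a ∈ K → F a = G a)} ⊆ K := by
    intro a ha
    simp only [mem_ofPred_eq, Classical.not_imp] at ha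
    exact ha.1
  refine measure_mono_null ?_ (addHaar_image_eq_zero_of_differentiableOn_of_addHaar_eq_zero volume
    (hd.mono hZ) hFG)
  intro y hy
  simp only [mem_ofPred_eq, Classical.not_imp] at hy
  refine ⟨m y, ?_, hn y hy.1⟩
  simp only [mem_ofPred_eq, Classical.not_imp]
  exact ⟨hm y hy.1, hy.2⟩

theorem inv1 {x y : ℝ} (hx : 0 < x) (hxy : x < y) : x / (x / y) = y := by
  have : 0 < y := hx.trans hxy
  field_simp

theorem inv2 {x y : ℝ} (hxy : x < y) (hy : y < 1) :
    1 - (1 - y) / (1 - x) * (1 - x) = y := by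
  have : 1 - x ≠ 0 := by linarith
  field_simp; ring

theorem inv3 {x y : ℝ} (hx : 0 < x) (hxy : x < y) (hy : y < 1) :
    x / (x + x * (1 - y) / (y * (1 - x)) * (1 - x)) = y := by
  have h0 : 0 < y := hx.trans hxy
  have : 1 - x ≠ 0 := by linarith
  have e : x + x * (1 - y) / (y * (1 - x)) * (1 - x) = x / y := by field_simp; ring
  rw [e, inv1 hx hxy]

theorem m1 {x y : ℝ} (hx : 0 < x) (hxy : x < y) (hy : y < 1) : x / y ∈ Ioo (0:ℝ) 1 :=
  ⟨div_pos hx (hx.trans hxy), (div_lt_one (hx.trans hxy)).2 hxy⟩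

theorem m2 {x y : ℝ} (hxy : x < y) (hy : y < 1) : (1 - y) / (1 - x) ∈ Ioo (0:ℝ) 1 :=
  ⟨div_pos (by linarith) (by linarith), (div_lt_one (by linarith)).2 (by linarith)⟩

theorem m3eq (x y : ℝ) : x * (1 - y) / (y * (1 - x)) = (x / y) * ((1 - y) / (1 - x)) := by
  rw [div_mul_div_comm]

theorem m3 {x y : ℝ} (hx : 0 < x) (hxy : x < y) (hy : y < 1) :
    x * (1 - y) / (y * (1 - x)) ∈ Ioo (0:ℝ) 1 := by
  rw [m3eq]
  have a := m1 hx hxy hy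
  have b := m2 hxy hy
  exact ⟨mul_pos a.1 b.1, by nlinarith [a.1, a.2, b.1, b.2]⟩

noncomputable def T5 (F : ℝ → ℝ) (x y : ℝ) : ℝ :=
  F y + F (x / y) + F ((1 - y) / (1 - x)) - F (x * (1 - y) / (y * (1 - x)))

/-- Fubini form of the five term relation. -/
def QQ (F : ℝ → ℝ) : Prop :=
  ∀ᵐ x, x ∈ Ioo (0:ℝ) 1 → ∀ᵐ y, y ∈ Ioo x 1 → F x = T5 F x y

theorem T5_congr {F G : ℝ → ℝ} {K S : Set ℝ} (hK : K ⊆ Ioo 0 1) (hFG : ∀ᵐ x, x ∈ K → F x = G x)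
    {x : ℝ} (hx : x ∈ Ioo (0:ℝ) 1) (hS : S ⊆ Ioo x 1)
    (h0 : ∀ y ∈ S, y ∈ K) (h1 : ∀ y ∈ S, x / y ∈ K) (h2 : ∀ y ∈ S, (1 - y) / (1 - x) ∈ K)
    (h3 : ∀ y ∈ S, x * (1 - y) / (y * (1 - x)) ∈ K) :
    ∀ᵐ y, y ∈ S → T5 F x y = T5 G x y := by
  have a1 := ae_comp hFG (fun y => x / y) (fun z => x / z) h1
    (fun y hy => inv1 hx.1 (hS hy).1)
    (fun z hz => ((differentiableAt_const x).div differentiableAt_id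
      (hK hz).1.ne').differentiableWithinAt)
  have a2 := ae_comp hFG (fun y => (1 - y) / (1 - x)) (fun z => 1 - z * (1 - x)) h2
    (fun y hy => inv2 (hS hy).1 (hS hy).2)
    (by fun_prop)
  have a3 := ae_comp hFG (fun y => x * (1 - y) / (y * (1 - x))) (fun z => x / (x + z * (1 - x))) h3
    (fun y hy => inv3 hx.1 (hS hy).1 (hS hy).2)
    (fun z hz => ((differentiableAt_const x).div (by fun_prop) (by
      have := mul_pos (hK hz).1 (sub_pos.2 hx.2)
      have := hx.1
      positivity)).differentiableWithinAt)
  filter_upwards [hFG, a1, a2, a3] with y b0 b1 b2 b3 hy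
  unfold T5
  rw [b0 (h0 y hy), b1 hy, b2 hy, b3 hy]

theorem QQ_congr {F G : ℝ → ℝ} (hFG : ∀ᵐ x, x ∈ Ioo (0:ℝ) 1 → F x = G x) (h : QQ F) : QQ G := by
  unfold QQ at h ⊢
  filter_upwards [h, hFG] with x hx hxg hx1
  have := T5_congr (S := Ioo x 1) (le_refl (Ioo (0:ℝ) 1)) hFG hx1 le_rfl
    (fun y hy => ⟨hx1.1.trans hy.1, hy.2⟩) (fun y hy => m1 hx1.1 hy.1 hy.2)
    (fun y hy => m2 hy.1 hy.2) (fun y hy => m3 hx1.1 hy.1 hy.2)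
  filter_upwards [this, hx hx1] with y a b hy
  rw [← a hy, ← b hy, hxg hx1]

theorem refl_congr {F G : ℝ → ℝ} (hFG : ∀ᵐ x, x ∈ Ioo (0:ℝ) 1 → F x = G x)
    (h : ∀ᵐ x, x ∈ Ioo (0:ℝ) 1 → F (1 - x) = - F x) :
    ∀ᵐ x, x ∈ Ioo (0:ℝ) 1 → G (1 - x) = - G x := by
  have := ae_comp (S := Ioo (0:ℝ) 1) hFG (fun y => 1 - y) (fun y => 1 - y)
    (fun y hy => ⟨by linarith [hy.2], by linarith [hy.1]⟩) (fun y hy => by ring) (by fun_prop)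
  filter_upwards [this, h, hFG] with x a b c hx
  rw [← a hx, b hx, c hx]

/-- bounds on all arguments. -/
theorem args {a x y : ℝ} (ha : 0 < a) (ha' : a < 1/2) (hx : x ∈ Ioo a (1 - a))
    (hy : y ∈ Icc (1 - a / 2) (1 - a / 4)) :
    y ∈ Icc (a ^ 2 / 4) (1 - a ^ 2 / 4) ∧ x / y ∈ Icc (a ^ 2 / 4) (1 - a ^ 2 / 4) ∧
    (1 - y) / (1 - x) ∈ Icc (a ^ 2 / 4) (1 - a ^ 2 / 4) ∧
    x * (1 - y) / (y * (1 - x)) ∈ Icc (a ^ 2 / 4) (1 - a ^ 2 / 4) := by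
  obtain ⟨hx1, hx2⟩ := hx
  obtain ⟨hy1, hy2⟩ := hy
  have hy0 : 0 < y := by linarith
  have h1x : 0 < 1 - x := by linarith
  have p1 : a ≤ x / y := by rw [le_div_iff₀ hy0]; nlinarith
  have p2 : x / y ≤ 1 - a / 2 := by rw [div_le_iff₀ hy0]; nlinarith
  have q1 : a / 4 ≤ (1 - y) / (1 - x) := by rw [le_div_iff₀ h1x]; nlinarith
  have q2 : (1 - y) / (1 - x) ≤ 1 / 2 := by rw [div_le_iff₀ h1x]; nlinarith
  rw [m3eq]
  refine ⟨⟨?_, ?_⟩, ⟨?_, ?_⟩, ⟨?_, ?_⟩, ⟨?_, ?_⟩⟩ <;> nlinarith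

theorem image_bound {C : ℝ} (n n' m : ℝ → ℝ) {K E S : Set ℝ} (hK : Convex ℝ K)
    (hd : ∀ z ∈ K, HasDerivAt n (n' z) z) (hC : ∀ z ∈ K, |n' z| ≤ C) (hC0 : 0 ≤ C)
    (hE : E ⊆ K) (hn : ∀ y ∈ S, n (m y) = y) (hm : ∀ y ∈ S, m y ∈ E) :
    volume S ≤ ENNReal.ofReal C * volume E := by
  have hL : LipschitzOnWith C.toNNReal n E := by
    refine LipschitzOnWith.mono (Convex.lipschitzOnWith_of_nnnorm_hasDerivWithin_le hK
      (fun z hz => (hd z hz).hasDerivWithinAt) (fun z hz => ?_)) hE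
    rw [← NNReal.coe_le_coe, Real.coe_toNNReal _ hC0]
    simpa using hC z hz
  have := hL.hausdorffMeasure_image_le (d := 1) (by norm_num)
  rw [hausdorffMeasure_real] at this
  refine (measure_mono ?_).trans (this.trans (by simp [ENNReal.ofReal]))
  intro y hy
  exact ⟨m y, hm y hy, hn y hy⟩

theorem small_sets (F : ℝ → ℝ) (hF : Measurable F) (ε : ENNReal) (hε : 0 < ε) :
    ∃ N : ℕ, volume {x | x ∈ Ioo (0:ℝ) 1 ∧ (N:ℝ) < |F x|} < ε := by
  have h := tendsto_measure_iInter_atTop (μ := volume)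
    (s := fun N : ℕ => {x | x ∈ Ioo (0:ℝ) 1 ∧ (N:ℝ) < |F x|})
    (fun N => (measurableSet_Ioo.inter (measurableSet_lt measurable_const hF.abs)).nullMeasurableSet)
    (fun N M h x hx => ⟨hx.1, lt_of_le_of_lt (by exact_mod_cast h) hx.2⟩)
    ⟨0, ne_top_of_le_ne_top (by simp) (measure_mono (t := Ioo (0:ℝ) 1) (fun x hx => hx.1))⟩
  have e : (⋂ N : ℕ, {x | x ∈ Ioo (0:ℝ) 1 ∧ (N:ℝ) < |F x|}) = ∅ := by
    ext x
    simp only [mem_iInter, mem_ofPred_eq, mem_empty_iff_false, iff_false, not_forall]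
    obtain ⟨N, hN⟩ := exists_nat_ge |F x|
    exact ⟨N, fun h => absurd h.2 (not_lt.2 hN)⟩
  rw [e, measure_empty] at h
  exact (h.eventually (gt_mem_nhds hε)).exists

theorem local_bdd (F : ℝ → ℝ) (hF : Measurable F) (hQ : QQ F) {a : ℝ} (ha : 0 < a) (ha' : a < 1/2) :
    ∃ M : ℝ, ∀ᵐ x, x ∈ Ioo a (1 - a) → |F x| ≤ M := by
  set b := a ^ 2 / 4 with hb
  have hb0 : 0 < b := by positivity
  have hba : b ≤ a := by rw [hb]; nlinarith
  set C := 1 / b ^ 2 with hC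
  have hC0 : 0 < C := by positivity
  have hb1 : b < 1 := by linarith
  have hC1 : 1 ≤ C := by
    rw [hC, le_div_iff₀ (by positivity)]; nlinarith
  obtain ⟨N, hN⟩ := small_sets F hF (ENNReal.ofReal (a / 16 / C) / 2) (by
    simp only [ENNReal.div_pos_iff, ne_eq, ENNReal.ofReal_eq_zero, not_le]
    exact ⟨by positivity, by simp⟩)
  refine ⟨4 * N, ?_⟩
  filter_upwards [hQ] with x hx hxa
  have hx1 : x ∈ Ioo (0:ℝ) 1 := ⟨by linarith [hxa.1], by linarith [hxa.2]⟩
  replace hx := hx hx1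
  set K := Icc b (1 - b) with hK
  set E := K ∩ {x | x ∈ Ioo (0:ℝ) 1 ∧ (N:ℝ) < |F x|} with hE
  set J := Icc (1 - a / 2) (1 - a / 4) with hJ
  have hEs : volume E ≤ ENNReal.ofReal (a / 16 / C) / 2 := (measure_mono inter_subset_right).trans hN.le
  have hJI : ∀ y ∈ J, x < y ∧ y < 1 := fun y hy => ⟨by linarith [hxa.2, hy.1], by linarith [hy.2]⟩
  have hKc : Convex ℝ K := convex_Icc _ _
  have hzK : ∀ z ∈ K, 0 < z := fun z hz => lt_of_lt_of_le hb0 hz.1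
  have B0 : volume {y | y ∈ J ∧ y ∈ E} ≤ ENNReal.ofReal C * volume E := by
    refine image_bound id (fun _ => 1) id hKc (fun z _ => hasDerivAt_id z) (fun z _ => by simpa using hC1)
      hC0.le inter_subset_left (fun y _ => rfl) (fun y hy => hy.2)
  have B1 : volume {y | y ∈ J ∧ x / y ∈ E} ≤ ENNReal.ofReal C * volume E := by
    refine image_bound (fun z => x / z) (fun z => -x / z ^ 2) (fun y => x / y) hKc (fun z hz => ?_)
      (fun z hz => ?_) hC0.le inter_subset_left (fun y hy => inv1 hx1.1 (hJI y hy.1).1) (fun y hy => hy.2)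
    · refine HasDerivAt.congr_deriv ((hasDerivAt_const z x).div (hasDerivAt_id z) (hzK z hz).ne') ?_
      simp
    · rw [abs_div, abs_neg, abs_of_pos hx1.1, abs_of_pos (pow_pos (hzK z hz) 2)]
      exact div_le_div₀ zero_le_one hx1.2.le (by positivity) (pow_le_pow_left₀ hb0.le hz.1 2)
  have B2 : volume {y | y ∈ J ∧ (1 - y) / (1 - x) ∈ E} ≤ ENNReal.ofReal C * volume E := by
    refine image_bound (fun z => 1 - z * (1 - x)) (fun z => -(1 - x)) (fun y => (1 - y) / (1 - x)) hKc (fun z hz => ?_)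
      (fun z hz => ?_) hC0.le inter_subset_left (fun y hy => inv2 (hJI y hy.1).1 (hJI y hy.1).2) (fun y hy => hy.2)
    · refine HasDerivAt.congr_deriv (((hasDerivAt_id z).mul_const (1 - x)).const_sub 1) ?_
      simp
    · rw [abs_neg, abs_of_pos (by linarith [hx1.2])]
      linarith [hx1.1]
  have B3 : volume {y | y ∈ J ∧ x * (1 - y) / (y * (1 - x)) ∈ E} ≤ ENNReal.ofReal C * volume E := by
    have hden : ∀ z ∈ K, b ≤ x + z * (1 - x) := fun z hz => by
      have := mul_pos (hzK z hz) (sub_pos.2 hx1.2)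
      linarith [hxa.1]
    refine image_bound (fun z => x / (x + z * (1 - x))) (fun z => -(x * (1 - x)) / (x + z * (1 - x)) ^ 2) (fun y => x * (1 - y) / (y * (1 - x))) hKc (fun z hz => ?_)
      (fun z hz => ?_) hC0.le inter_subset_left (fun y hy => inv3 hx1.1 (hJI y hy.1).1 (hJI y hy.1).2) (fun y hy => hy.2)
    · refine HasDerivAt.congr_deriv ((hasDerivAt_const z x).div (((hasDerivAt_id z).mul_const (1 - x)).const_add x) (by have := hden z hz; simp; linarith)) ?_
      simp
    · have h1 := hden z hz
      have h2 : 0 < x * (1 - x) := mul_pos hx1.1 (sub_pos.2 hx1.2)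
      rw [abs_div, abs_neg, abs_of_pos h2, abs_of_pos (pow_pos (hb0.trans_le h1) 2)]
      exact div_le_div₀ zero_le_one (by nlinarith [hx1.1, hx1.2, sq_nonneg x]) (by positivity) (pow_le_pow_left₀ hb0.le h1 2)
  have hCE : ENNReal.ofReal C * volume E ≤ ENNReal.ofReal (a / 16) / 2 := by
    calc ENNReal.ofReal C * volume E ≤ ENNReal.ofReal C * (ENNReal.ofReal (a / 16 / C) / 2) := by gcongr
      _ = ENNReal.ofReal (a / 16) / 2 := by
        rw [← mul_div_assoc, ← ENNReal.ofReal_mul hC0.le]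
        congr 2; field_simp
  have hlt : ENNReal.ofReal (a / 16) / 2 = ENNReal.ofReal (a / 32) := by
    rw [show (2:ENNReal) = ENNReal.ofReal 2 by simp, ← ENNReal.ofReal_div_of_pos (by norm_num)]
    congr 1; ring
  rw [hlt] at hCE
  have hbad : volume (({y | y ∈ J ∧ y ∈ E} ∪ {y | y ∈ J ∧ x / y ∈ E}) ∪ ({y | y ∈ J ∧ (1 - y) / (1 - x) ∈ E}
      ∪ {y | y ∈ J ∧ x * (1 - y) / (y * (1 - x)) ∈ E}) ∪ {y | ¬ (y ∈ Ioo x 1 → F x = T5 F x y)}) ≤ ENNReal.ofReal (a / 8) := by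
    refine (measure_union_le _ _).trans ?_
    rw [ae_iff.1 hx, add_zero]
    refine (measure_union_le _ _).trans ?_
    refine (add_le_add ((measure_union_le _ _).trans (add_le_add (B0.trans hCE) (B1.trans hCE)))
      ((measure_union_le _ _).trans (add_le_add (B2.trans hCE) (B3.trans hCE)))).trans ?_
    rw [← ENNReal.ofReal_add (by positivity) (by positivity), ← ENNReal.ofReal_add (by positivity) (by positivity)]
    apply ENNReal.ofReal_le_ofReal; linarith
  have hJv : ENNReal.ofReal (a / 8) < volume J := by
    rw [hJ, Real.volume_Icc]
    apply (ENNReal.ofReal_lt_ofReal_iff (by linarith)).2; linarith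
  obtain ⟨y, hyJ, hy⟩ : ∃ y ∈ J, y ∉ (({y | y ∈ J ∧ y ∈ E} ∪ {y | y ∈ J ∧ x / y ∈ E}) ∪ ({y | y ∈ J ∧ (1 - y) / (1 - x) ∈ E}
      ∪ {y | y ∈ J ∧ x * (1 - y) / (y * (1 - x)) ∈ E}) ∪ {y | ¬ (y ∈ Ioo x 1 → F x = T5 F x y)}) := by
    by_contra hcon
    have hcon' : J ⊆ _ := fun y hy => by_contra fun h => hcon ⟨y, hy, h⟩
    exact absurd (measure_mono hcon') (not_le.2 (hbad.trans_lt hJv))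
  simp only [mem_union, mem_ofPred_eq, not_or, not_and, not_not] at hy
  obtain ⟨⟨⟨c0, c1⟩, c2, c3⟩, c4⟩ := hy
  obtain ⟨k0, k1, k2, k3⟩ := args ha ha' hxa hyJ
  have key : ∀ z ∈ K, z ∉ E → |F z| ≤ N := by
    intro z hz hzE
    by_contra hcon
    exact hzE ⟨hz, ⟨hzK z hz, by linarith [hz.2]⟩, not_le.1 hcon⟩
  have f0 := key _ k0 (c0 hyJ)
  have f1 := key _ k1 (c1 hyJ)
  have f2 := key _ k2 (c2 hyJ)
  have f3 := key _ k3 (c3 hyJ)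
  rw [c4 (hJI y hyJ)]
  unfold T5
  rw [abs_le] at *
  constructor <;> linarith

theorem smooth_term (G : ℝ → ℝ) (hG : Measurable G) (M : ℝ) (hGM : ∀ t, |G t| ≤ M)
    (w : ℝ → ℝ) (hw : ContDiff ℝ 3 w) (J : Set ℝ) (hJ : IsCompact J) (hwJ : ∀ y, y ∉ J → w y = 0)
    (ψ ψ' ρ : ℝ → ℝ) (hψ : ContDiff ℝ 3 ψ) (hψ' : ContDiff ℝ 3 ψ') (hd : ∀ t, HasDerivAt ψ (ψ' t) t)
    (hpos : ∀ t, 0 ≤ ψ' t) (hl : ∀ t, ρ (ψ t) = t) (hrr : ∀ y ∈ J, ψ (ρ y) = y)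
    (hρ : ContinuousOn ρ J) :
    ∃ c : ℝ → ℝ, ContDiff ℝ 3 c ∧ ∀ u, ∫ y, w y * G (u - ρ y) = c u := by
  set W : ℝ → ℝ := fun t => ψ' t * w (ψ t) with hW
  have hWc : HasCompactSupport W := by
    refine HasCompactSupport.intro (hJ.image_of_continuousOn hρ) (fun t ht => ?_)
    have : ψ t ∉ J := fun h => ht ⟨ψ t, h, hl t⟩
    simp [hW, hwJ _ this]
  have hWd : ContDiff ℝ 3 W := hψ'.mul (hw.comp hψ)
  have hGl : LocallyIntegrable G volume := by
    have hc : LocallyIntegrable (fun _ : ℝ => M) volume := locallyIntegrable_const M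
    refine hc.mono hG.aestronglyMeasurable (Filter.Eventually.of_forall fun t => ?_)
    rw [Real.norm_eq_abs, Real.norm_eq_abs]
    exact (hGM t).trans (le_abs_self M)
  refine ⟨convolution W G (ContinuousLinearMap.mul ℝ ℝ) volume,
    hWc.contDiff_convolution_left (n := 3) _ hWd hGl, fun u => ?_⟩
  rw [convolution_def]
  have hinj : InjOn ψ univ := fun s _ t _ h => by rw [← hl s, ← hl t, h]
  have := integral_image_eq_integral_abs_deriv_smul (s := univ) (f := ψ) (f' := ψ') MeasurableSet.univ
    (fun x _ => (hd x).hasDerivWithinAt) hinj (fun y => w y * G (u - ρ y))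
  rw [setIntegral_eq_integral_of_forall_compl_eq_zero] at this
  · rw [this, setIntegral_univ]
    congr 1
    ext t
    simp only [hl, abs_of_nonneg (hpos t), smul_eq_mul, ContinuousLinearMap.mul_apply', hW]
    ring
  · intro y hy
    have : y ∉ J := fun h => hy ⟨ρ y, mem_univ _, hrr y h⟩
    simp [hwJ y this]

theorem local_smooth (F : ℝ → ℝ) (hF : Measurable F) (hQ : QQ F) {a : ℝ} (ha : 0 < a) (ha' : a < 1/2) :
    ∃ g : ℝ → ℝ, ContDiffOn ℝ 3 g (Ioo 0 1) ∧ ∀ᵐ x, x ∈ Ioo a (1 - a) → F x = g x := by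
  have hb0 : 0 < a ^ 2 / 8 := by positivity
  have hb1 : a ^ 2 / 8 < 1/2 := by nlinarith
  obtain ⟨M', hM'⟩ := local_bdd F hF hQ hb0 hb1
  set M := |M'|
  have hM : ∀ᵐ x, x ∈ Ioo (a ^ 2 / 8) (1 - a ^ 2 / 8) → |F x| ≤ M := by
    filter_upwards [hM'] with x hx h
    exact (hx h).trans (le_abs_self _)
  set F0 : ℝ → ℝ := {x | |F x| ≤ M}.indicator F with hF0
  have hF0m : Measurable F0 := hF.indicator (measurableSet_le hF.abs measurable_const)
  have hF0b : ∀ x, |F0 x| ≤ M := by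
    intro x
    by_cases h : |F x| ≤ M
    · rw [hF0, indicator_of_mem (show x ∈ {x | |F x| ≤ M} from h)]; exact h
    · rw [hF0, indicator_of_notMem (show x ∉ {x | |F x| ≤ M} from h)]; simp [M]
  set K := Ioo (a ^ 2 / 8) (1 - a ^ 2 / 8) with hK
  have hFF0 : ∀ᵐ x, x ∈ K → F x = F0 x := by
    filter_upwards [hM] with x hx h
    rw [hF0, indicator_of_mem (show x ∈ {x | |F x| ≤ M} from hx h)]
  have hK01 : K ⊆ Ioo 0 1 := fun x hx => ⟨hb0.trans hx.1, by linarith [hx.2]⟩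
  have hKs : Icc (a ^ 2 / 4) (1 - a ^ 2 / 4) ⊆ K := fun x hx => ⟨by linarith [hx.1], by linarith [hx.2]⟩
  set J := Icc (1 - a / 2) (1 - a / 4) with hJ
  have hJ01 : ∀ y ∈ J, 0 < y ∧ y < 1 := fun y hy => ⟨by linarith [hy.1], by linarith [hy.2]⟩
  let β : ContDiffBump (1 - 3 * a / 8) := ⟨a / 16, a / 8, by positivity, by linarith⟩
  set w : ℝ → ℝ := β.normed volume with hw
  have hwd : ContDiff ℝ 3 w := β.contDiff_normed
  have hw1 : ∫ y, w y = 1 := β.integral_normed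
  have hwi : Integrable w := β.integrable_normed
  have hwJ : ∀ y, y ∉ J → w y = 0 := by
    intro y hy
    by_contra h
    have h2 : y ∈ Function.support w := h
    rw [hw, β.support_normed_eq, Metric.mem_ball, Real.dist_eq, abs_lt] at h2
    have h3 : -(a/8) < y - (1 - 3 * a / 8) ∧ y - (1 - 3 * a / 8) < a / 8 := h2
    exact hy ⟨by linarith [h3.1], by linarith [h3.2]⟩
  set G : ℝ → ℝ := fun t => F0 (Real.exp t) with hG
  have hGm : Measurable G := hF0m.comp Real.measurable_exp
  have hGb : ∀ t, |G t| ≤ M := fun t => hF0b _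
  obtain ⟨c1, hc1, hc1'⟩ := smooth_term G hGm M hGb w hwd J isCompact_Icc hwJ Real.exp Real.exp Real.log
    Real.contDiff_exp Real.contDiff_exp Real.hasDerivAt_exp (fun t => (Real.exp_pos t).le) Real.log_exp
    (fun y hy => Real.exp_log (hJ01 y hy).1)
    (fun y hy => (Real.continuousAt_log (hJ01 y hy).1.ne').continuousWithinAt)
  obtain ⟨c2, hc2, hc2'⟩ := smooth_term G hGm M hGb w hwd J isCompact_Icc hwJ
    (fun t => 1 - Real.exp (-t)) (fun t => Real.exp (-t)) (fun y => - Real.log (1 - y))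
    (by fun_prop) (by fun_prop) (fun t => by
      refine HasDerivAt.congr_deriv ((hasDerivAt_neg t).exp.const_sub 1) ?_
      simp) (fun t => (Real.exp_pos _).le) (fun t => by simp)
    (fun y hy => by simp only [neg_neg]; rw [Real.exp_log (by linarith [(hJ01 y hy).2])]; ring)
    (fun y hy => (((Real.continuousAt_log (by linarith [(hJ01 y hy).2] : (1 - y) ≠ 0)).comp
      (f := fun y : ℝ => 1 - y) (by fun_prop)).neg).continuousWithinAt)
  have hexp1 : ∀ t : ℝ, 1 + Real.exp (-t) ≠ 0 := fun t => by positivity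
  obtain ⟨c3, hc3, hc3'⟩ := smooth_term G hGm M hGb w hwd J isCompact_Icc hwJ
    (fun t => 1 / (1 + Real.exp (-t))) (fun t => Real.exp (-t) / (1 + Real.exp (-t)) ^ 2)
    (fun y => Real.log y - Real.log (1 - y))
    (contDiff_const.div (by fun_prop) hexp1)
    (ContDiff.div (by fun_prop) (by fun_prop) (fun t => pow_ne_zero 2 (hexp1 t))) (fun t => by
      refine HasDerivAt.congr_deriv ((hasDerivAt_const t (1:ℝ)).div ((hasDerivAt_neg t).exp.const_add 1) (hexp1 t)) ?_
      simp) (fun t => by positivity) (fun t => by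
        have e : 1 - 1 / (1 + Real.exp (-t)) = Real.exp (-t) / (1 + Real.exp (-t)) := by
          have := hexp1 t
          field_simp; ring
        simp only [e]
        rw [Real.log_div one_ne_zero (hexp1 t), Real.log_div (Real.exp_ne_zero _) (hexp1 t), Real.log_exp, Real.log_one]
        ring)
    (fun y hy => by
      have h0 := (hJ01 y hy).1
      have h1 : 0 < 1 - y := by linarith [(hJ01 y hy).2]
      simp only [neg_sub]
      rw [Real.exp_sub, Real.exp_log h0, Real.exp_log h1]
      field_simp; ring)
    (fun y hy => ((Real.continuousAt_log (hJ01 y hy).1.ne').sub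
      ((Real.continuousAt_log (by linarith [(hJ01 y hy).2] : (1 - y) ≠ 0)).comp
      (f := fun y : ℝ => 1 - y) (by fun_prop))).continuousWithinAt)
  have hlog : ContDiffOn ℝ 3 Real.log (Ioo 0 1) :=
    Real.contDiffOn_log.mono (fun x hx => hx.1.ne')
  have hlog1 : ContDiffOn ℝ 3 (fun x => Real.log (1 - x)) (Ioo 0 1) :=
    ContDiffOn.log (by fun_prop) (fun x hx => by linarith [hx.2])
  refine ⟨fun x => (∫ y, w y * F0 y) + c1 (Real.log x) + c2 (- Real.log (1 - x))
    - c3 (Real.log x - Real.log (1 - x)), ?_, ?_⟩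
  · exact ((contDiffOn_const.add (hc1.comp_contDiffOn hlog)).add
      (hc2.comp_contDiffOn hlog1.neg)).sub (hc3.comp_contDiffOn (hlog.sub hlog1))
  · filter_upwards [hQ] with x hx hxa
    have hx01 : x ∈ Ioo (0:ℝ) 1 := ⟨by linarith [hxa.1], by linarith [hxa.2]⟩
    have hJx : J ⊆ Ioo x 1 := fun y hy => ⟨by linarith [hxa.2, hy.1], by linarith [hy.2]⟩
    have hA := fun y (hy : y ∈ J) => args ha ha' hxa hy
    have hcg := T5_congr hK01 hFF0 hx01 hJx (fun y hy => hKs (hA y hy).1) (fun y hy => hKs (hA y hy).2.1)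
      (fun y hy => hKs (hA y hy).2.2.1) (fun y hy => hKs (hA y hy).2.2.2)
    have h1x : 0 < 1 - x := by linarith [hx01.2]
    have main : ∀ᵐ y, w y * F x = w y * F0 y + w y * G (Real.log x - Real.log y)
        + w y * G (- Real.log (1 - x) - - Real.log (1 - y))
        - w y * G ((Real.log x - Real.log (1 - x)) - (Real.log y - Real.log (1 - y))) := by
      filter_upwards [hx hx01, hcg] with y h1 h2
      by_cases hy : y ∈ J
      · rw [h1 (hJx hy), h2 hy]
        have hy0 := (hJ01 y hy).1
        have hy1 : 0 < 1 - y := by linarith [(hJ01 y hy).2]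
        have e1 : Real.exp (Real.log x - Real.log y) = x / y := by
          rw [Real.exp_sub, Real.exp_log hx01.1, Real.exp_log hy0]
        have e2 : Real.exp (- Real.log (1 - x) - - Real.log (1 - y)) = (1 - y) / (1 - x) := by
          rw [show - Real.log (1 - x) - - Real.log (1 - y) = Real.log (1 - y) - Real.log (1 - x) by ring,
            Real.exp_sub, Real.exp_log h1x, Real.exp_log hy1]
        have e3 : Real.exp ((Real.log x - Real.log (1 - x)) - (Real.log y - Real.log (1 - y)))
            = x * (1 - y) / (y * (1 - x)) := by
          rw [Real.exp_sub, Real.exp_sub, Real.exp_sub, Real.exp_log h1x, Real.exp_log hy1,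
            Real.exp_log hx01.1, Real.exp_log hy0]
          field_simp
        simp only [hG, e1, e2, e3]
        unfold T5
        ring
      · simp [hwJ y hy]
    have int : ∀ h : ℝ → ℝ, Measurable h → (∀ y, |h y| ≤ M) → Integrable (fun y => w y * h y) :=
      fun h hm hb => hwi.mul_bdd hm.aestronglyMeasurable (Filter.Eventually.of_forall hb)
    have i0 := int F0 hF0m hF0b
    have i1 := int (fun y => G (Real.log x - Real.log y)) (by fun_prop) (fun y => hGb _)
    have i2 := int (fun y => G (- Real.log (1 - x) - - Real.log (1 - y))) (by fun_prop) (fun y => hGb _)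
    have i3 := int (fun y => G ((Real.log x - Real.log (1 - x)) - (Real.log y - Real.log (1 - y))))
      (by fun_prop) (fun y => hGb _)
    have hI := integral_congr_ae main
    have i01 : Integrable (fun y => w y * F0 y + w y * G (Real.log x - Real.log y)) := i0.add i1
    have i012 : Integrable (fun y => w y * F0 y + w y * G (Real.log x - Real.log y)
        + w y * G (- Real.log (1 - x) - - Real.log (1 - y))) := i01.add i2
    rw [integral_mul_const, hw1, one_mul, integral_sub i012 i3,
      integral_add i01 i2, integral_add i0 i1, hc1', hc2' (- Real.log (1 - x)), hc3' (Real.log x - Real.log (1 - x))] at hI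
    exact hI

theorem global_smooth (F : ℝ → ℝ) (hF : Measurable F) (hQ : QQ F) :
    ∃ g : ℝ → ℝ, ContDiffOn ℝ 3 g (Ioo 0 1) ∧ ∀ᵐ x, x ∈ Ioo (0:ℝ) 1 → F x = g x := by
  set a : ℕ → ℝ := fun n => 1 / ((n:ℝ) + 3) with hadef
  have ha : ∀ n, 0 < a n := fun n => by simp only [hadef]; positivity
  have ha' : ∀ n, a n < 1/2 := fun n => by
    simp only [hadef]
    apply one_div_lt_one_div_of_lt (by norm_num)
    have : (0:ℝ) ≤ n := Nat.cast_nonneg n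
    linarith
  choose g hg hFg using fun n => local_smooth F hF hQ (ha n) (ha' n)
  have hcov : ∀ x ∈ Ioo (0:ℝ) 1, ∃ n, x ∈ Ioo (a n) (1 - a n) := by
    intro x hx
    obtain ⟨n, hn⟩ := exists_nat_one_div_lt (show 0 < min x (1 - x) from lt_min hx.1 (by linarith [hx.2]))
    have : a n < min x (1 - x) := lt_of_le_of_lt (by
      simp only [hadef]
      apply one_div_le_one_div_of_le (by positivity)
      linarith) hn
    exact ⟨n, this.trans_le (min_le_left _ _), by linarith [this.trans_le (min_le_right _ _)]⟩
  have hsub : ∀ n, Ioo (a n) (1 - a n) ⊆ Ioo (0:ℝ) 1 := fun n x hx =>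
    ⟨(ha n).trans hx.1, by linarith [hx.2, ha n]⟩
  have hgg : ∀ n m, EqOn (g n) (g m) (Ioo (a n) (1 - a n) ∩ Ioo (a m) (1 - a m)) := by
    intro n m
    refine Measure.eqOn_open_of_ae_eq (μ := volume) ?_ (isOpen_Ioo.inter isOpen_Ioo)
      ((hg n).continuousOn.mono (inter_subset_left.trans (hsub n)))
      ((hg m).continuousOn.mono (inter_subset_right.trans (hsub m)))
    refine (ae_restrict_iff' (measurableSet_Ioo.inter measurableSet_Ioo)).2 ?_
    filter_upwards [hFg n, hFg m] with x h1 h2 hx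
    rw [← h1 hx.1, h2 hx.2]
  choose! N hN using hcov
  have hglob : ∀ n, ∀ x ∈ Ioo (a n) (1 - a n), g (N x) x = g n x := fun n x hx =>
    hgg _ _ ⟨hN x (hsub n hx), hx⟩
  refine ⟨fun x => g (N x) x, ?_, ?_⟩
  · intro x hx
    have h1 : ContDiffAt ℝ 3 (g (N x)) x := (hg (N x)).contDiffAt (isOpen_Ioo.mem_nhds hx)
    refine (h1.congr_of_eventuallyEq ?_).contDiffWithinAt
    filter_upwards [isOpen_Ioo.mem_nhds (hN x hx)] with y hy
    exact hglob _ y hy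
  · filter_upwards [ae_all_iff.2 hFg] with x h hx
    exact h _ (hN x hx)

theorem core_zero (F : ℝ → ℝ) (hF : Measurable F) (hQ : QQ F)
    (hR : ∀ᵐ x, x ∈ Ioo (0:ℝ) 1 → F (1 - x) = - F x) : ∀ᵐ x, x ∈ Ioo (0:ℝ) 1 → F x = 0 := by
  obtain ⟨g, hg, hFg⟩ := global_smooth F hF hQ
  have hQg := QQ_congr hFg hQ
  have hRg := refl_congr hFg hR
  have hgc := hg.continuousOn
  have hgca : ∀ x ∈ Ioo (0:ℝ) 1, ContinuousAt g x := fun x hx => hgc.continuousAt (isOpen_Ioo.mem_nhds hx)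
  have hr : ∀ x ∈ Ioo (0:ℝ) 1, g (1 - x) = - g x := by
    refine Measure.eqOn_open_of_ae_eq (μ := volume) ((ae_restrict_iff' measurableSet_Ioo).2 hRg) isOpen_Ioo ?_ hgc.neg
    exact hgc.comp (f := fun x : ℝ => 1 - x) (by fun_prop) (fun x hx => ⟨by linarith [hx.2], by linarith [hx.1]⟩)
  have hT : ∀ x y : ℝ, 0 < x → x < y → y < 1 → ContinuousAt (fun p : ℝ × ℝ => T5 g p.1 p.2) (x, y) := by
    intro x y hx hxy hy
    have hy0 : y ≠ 0 := by linarith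
    have hx1 : 1 - x ≠ 0 := by linarith
    unfold T5
    have k0 : ContinuousAt (fun p : ℝ × ℝ => p.2) (x, y) := by fun_prop
    have k1 : ContinuousAt (fun p : ℝ × ℝ => p.1 / p.2) (x, y) := ContinuousAt.div (by fun_prop) (by fun_prop) hy0
    have k2 : ContinuousAt (fun p : ℝ × ℝ => (1 - p.2) / (1 - p.1)) (x, y) := ContinuousAt.div (by fun_prop) (by fun_prop) hx1
    have k3 : ContinuousAt (fun p : ℝ × ℝ => p.1 * (1 - p.2) / (p.2 * (1 - p.1))) (x, y) := ContinuousAt.div (by fun_prop) (by fun_prop) (mul_ne_zero hy0 hx1)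
    exact (((ContinuousAt.comp (f := fun p : ℝ × ℝ => p.2) (hgca _ ⟨by linarith, hy⟩) k0).add
      (ContinuousAt.comp (f := fun p : ℝ × ℝ => p.1 / p.2) (hgca _ (m1 hx hxy hy)) k1)).add
      (ContinuousAt.comp (f := fun p : ℝ × ℝ => (1 - p.2) / (1 - p.1)) (hgca _ (m2 hxy hy)) k2)).sub
      (ContinuousAt.comp (f := fun p : ℝ × ℝ => p.1 * (1 - p.2) / (p.2 * (1 - p.1))) (hgca _ (m3 hx hxy hy)) k3)
  have s1 : ∀ᵐ x, x ∈ Ioo (0:ℝ) 1 → ∀ y ∈ Ioo x 1, g x = T5 g x y := by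
    filter_upwards [hQg] with x hx hx1
    refine Measure.eqOn_open_of_ae_eq (μ := volume) (f := fun _ => g x) ((ae_restrict_iff' measurableSet_Ioo).2 (hx hx1)) isOpen_Ioo
      continuousOn_const ?_
    intro y hy
    exact (ContinuousAt.comp (f := fun y : ℝ => (x, y)) (hT x y hx1.1 hy.1 hy.2) (by fun_prop)).continuousWithinAt
  have he : ∀ x y : ℝ, 0 < x → x < y → y < 1 → g x = T5 g x y := by
    intro x y hx hxy hy
    refine Measure.eqOn_open_of_ae_eq (μ := volume) (U := Ioo 0 y) (g := fun x => T5 g x y) ((ae_restrict_iff' measurableSet_Ioo).2 ?_) isOpen_Ioo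
      (hgc.mono (fun z hz => ⟨hz.1, hz.2.trans hy⟩)) ?_ ⟨hx, hxy⟩
    · filter_upwards [s1] with z hz hzy
      exact hz ⟨hzy.1, hzy.2.trans hy⟩ y ⟨hzy.2, hy⟩
    · intro z hz
      exact (ContinuousAt.comp (f := fun z : ℝ => (z, y)) (hT z y hz.1 hz.2 hy) (by fun_prop)).continuousWithinAt
  have hg1 : ContDiffOn ℝ 2 (deriv g) (Ioo 0 1) := hg.deriv_of_isOpen isOpen_Ioo (by norm_num)
  have hg2 : ContDiffOn ℝ 1 (deriv (deriv g)) (Ioo 0 1) := hg1.deriv_of_isOpen isOpen_Ioo (by norm_num)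
  have dd : ∀ (f : ℝ → ℝ) (n : WithTop ℕ∞), ContDiffOn ℝ n f (Ioo 0 1) → n ≠ 0 → ∀ x ∈ Ioo (0:ℝ) 1, HasDerivAt f (deriv f x) x :=
    fun f n hf hn x hx => ((hf.contDiffAt (isOpen_Ioo.mem_nhds hx)).differentiableAt hn).hasDerivAt
  have := info_zero g _ _ _ (dd g 3 hg (by norm_num)) (dd _ 2 hg1 (by norm_num)) (dd _ 1 hg2 (by norm_num)) hr
    (fun x y hx hxy hy => by
      have := he x y hx hxy hy
      unfold T5 at this
      linarith)
  filter_upwards [hFg] with x h hx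
  rw [h hx, this x hx]

/-- **Uniqueness** for the perturbed Spence–Abel system: two measurable a.e. solutions with the
same data `(R, C)` agree almost everywhere on `(0,1)`. -/
theorem perturbed_spence_abel_uniqueness (R : ℝ × ℝ → ℝ)
    (hR : AEMeasurable R (volume.restrict P2)) (C : ℝ) (L₁ L₂ : ℝ → ℝ)
    (hL₁ : AEMeasurable L₁ (volume.restrict (Set.Ioo (0:ℝ) 1)))
    (hL₂ : AEMeasurable L₂ (volume.restrict (Set.Ioo (0:ℝ) 1)))
    (h₁ : SolvesAE R C L₁) (h₂ : SolvesAE R C L₂) :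
    ∀ᵐ x ∂(volume.restrict (Set.Ioo (0:ℝ) 1)), L₁ x = L₂ x := by
  have hP2 : MeasurableSet P2 := by
    unfold P2
    exact (measurableSet_lt measurable_const measurable_fst).inter
      ((measurableSet_lt measurable_fst measurable_snd).inter
        (measurableSet_lt measurable_snd measurable_const))
  have hm := hL₁.sub hL₂
  set D : ℝ → ℝ := L₁ - L₂ with hD
  have hQ : QQ D := by
    have a := (ae_restrict_iff' hP2).1 h₁.1
    have b := (ae_restrict_iff' hP2).1 h₂.1
    have c : ∀ᵐ p : ℝ × ℝ, p ∈ P2 → D p.1 = T5 D p.1 p.2 := by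
      filter_upwards [a, b] with p ha hb hp
      have ha := ha hp
      have hb := hb hp
      have e1 : (p.2 - 1) / (p.1 - 1) = (1 - p.2) / (1 - p.1) := by
        rw [← neg_div_neg_eq]; simp
      have e2 : p.1 * (p.2 - 1) / (p.2 * (p.1 - 1)) = p.1 * (1 - p.2) / (p.2 * (1 - p.1)) := by
        rw [← neg_div_neg_eq, ← mul_neg, ← mul_neg]; simp
      rw [e1, e2] at ha hb
      simp only [hD, T5, Pi.sub_apply]
      linarith
    rw [Measure.volume_eq_prod] at c
    have c := Measure.ae_ae_of_ae_prod c
    unfold QQ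
    filter_upwards [c] with x hx hx1
    filter_upwards [hx] with y hy hy1
    exact hy ⟨hx1.1, hy1.1, hy1.2⟩
  have hRf : ∀ᵐ x, x ∈ Ioo (0:ℝ) 1 → D (1 - x) = - D x := by
    filter_upwards [(ae_restrict_iff' measurableSet_Ioo).1 h₁.2, (ae_restrict_iff' measurableSet_Ioo).1 h₂.2]
      with x ha hb hx
    simp only [hD, Pi.sub_apply]
    linarith [ha hx, hb hx]
  have hmk := (ae_restrict_iff' measurableSet_Ioo).1 hm.ae_eq_mk
  have := core_zero (hm.mk D) hm.measurable_mk (QQ_congr hmk hQ) (refl_congr hmk hRf)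
  refine (ae_restrict_iff' measurableSet_Ioo).2 ?_
  filter_upwards [this, hmk] with x h1 h2 hx
  have := (h2 hx).trans (h1 hx)
  simp only [hD, Pi.sub_apply] at this
  linarith
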